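/- Let X be a metric space with a Borel probability measure λ, let (x_j)_{j∈J} be a finite family of points of X, and let C > 0 and 0 < δ < 1. Write N_η(A) for the open η-neighborhood of A and N_{−η}(A) for the complement of N_η(X \ A). Suppose that for every subset B ⊆ X, (1−δ)·λ(N_{−δ}(B)) ≤ #{j ∈ J : x_j ∈ B} / C ≤ (1+δ)·λ(N_δ(B)). Then the open δ-neighborhood of the point set F = {x_j : j ∈ J} has full λ-measure; consequently, if in addition λ(U) > 0 for every nonempty open U ⊆ X, then for every r > δ the open r-neighborhood N_r(F) equals all of X. -/

import Mathlib

open MeasureTheory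

/-- The open `η`-neighborhood of a set `A` in a metric space:
the union of the open balls of radius `η` centered at points of `A`. -/
def nbhd {X : Type*} [MetricSpace X] (η : ℝ) (A : Set X) : Set X :=
  ⋃ a ∈ A, Metric.ball a η

section Thickening

lemma nbhd_eq_thickening {X : Type*} [MetricSpace X] (η : ℝ) (A : Set X) :
    nbhd η A = Metric.thickening η A :=
  Metric.thickening_eq_biUnion_ball.symm

lemma thickening_eq_univ_of_dense_thickening {X : Type*} [PseudoEMetricSpace X]
    {δ r : ℝ} {s : Set X} (hs : Dense (Metric.thickening δ s)) (hr : δ < r) :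
    Metric.thickening r s = Set.univ :=
  Set.univ_subset_iff.mp <| calc
    Set.univ = closure (Metric.thickening δ s) := hs.closure_eq.symm
    _ ⊆ Metric.thickening (r - δ) (Metric.thickening δ s) :=
      Metric.closure_subset_thickening (sub_pos.mpr hr) _
    _ ⊆ Metric.thickening (r - δ + δ) s := Metric.thickening_thickening_subset _ _ _
    _ = Metric.thickening r s := by rw [sub_add_cancel]

end Thickening

section Equidistribution

variable {X J : Type*} [MeasurableSpace X] {μ : Measure X}

lemma ofReal_mul_measure_le_encard [IsFiniteMeasure μ] {a C : ℝ} (hC : 0 < C)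
    {s : Set X} {t : Set J} (h : a * (μ s).toReal ≤ (Nat.card t : ℝ) / C) :
    ENNReal.ofReal (a * C) * μ s ≤ (t.encard : ENNReal) := by
  have hcard : a * C * (μ s).toReal ≤ (Nat.card t : ℝ) := by
    rw [mul_right_comm]
    exact (le_div_iff₀ hC).mp h
  calc
    ENNReal.ofReal (a * C) * μ s = ENNReal.ofReal (a * C * (μ s).toReal) := by
      rw [ENNReal.ofReal_mul' ENNReal.toReal_nonneg, ENNReal.ofReal_toReal (measure_ne_top μ s)]
    _ ≤ ENNReal.ofReal (Nat.card t) := ENNReal.ofReal_le_ofReal hcard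
    _ = ((Nat.card t : ℕ∞) : ENNReal) := by rw [ENNReal.ofReal_natCast, ENat.toENNReal_coe]
    _ ≤ (t.encard : ENNReal) := ENat.toENNReal_le.mpr t.ncard_le_encard

variable [PseudoEMetricSpace X] {δ : ℝ}

lemma measure_compl_thickening_range_eq_zero {x : J → X} {c : ENNReal} (hc : c ≠ 0)
    (hequi : ∀ B : Set X,
      c * μ (Metric.thickening δ Bᶜ)ᶜ ≤ ((x ⁻¹' B).encard : ENNReal)) :
    μ (Metric.thickening δ (Set.range x))ᶜ = 0 := by
  -- The complement of the point set contains none of the points, so its inner neighborhood is null.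
  have hnull : c * μ (Metric.thickening δ (Set.range x))ᶜ ≤ 0 := by
    simpa using hequi (Set.range x)ᶜ
  exact (mul_eq_zero.mp (nonpos_iff_eq_zero.mp hnull)).resolve_left hc

theorem stmt14_general {x : J → X} {c : ENNReal} (hc : c ≠ 0)
    (hequi : ∀ B : Set X,
      c * μ (Metric.thickening δ Bᶜ)ᶜ ≤ ((x ⁻¹' B).encard : ENNReal)) :
    μ (Metric.thickening δ (Set.range x))ᶜ = 0 ∧
    ((∀ U : Set X, IsOpen U → U.Nonempty → 0 < μ U) →
      ∀ r > δ, Metric.thickening r (Set.range x) = Set.univ) := by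
  have hfull := measure_compl_thickening_range_eq_zero hc hequi
  refine ⟨hfull, fun hpos r hr => ?_⟩
  have : μ.IsOpenPosMeasure := ⟨fun U hU hne => (hpos U hU hne).ne'⟩
  exact thickening_eq_univ_of_dense_thickening (Measure.dense_of_ae hfull) hr

end Equidistribution

/-- If the finite point family `(x j)` satisfies the set-level equidistribution at scale
`δ < 1`, then the open `δ`-neighborhood of the point set `F = range x` has full measure;
consequently, if moreover `λ` is positive on every nonempty open set, then for every
`r > δ` the open `r`-neighborhood of `F` is all of `X`. -/
theorem stmt14 {X : Type*} [MetricSpace X] [MeasurableSpace X] [BorelSpace X]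
    (lam : Measure X) [IsProbabilityMeasure lam]
    {J : Type*} [Fintype J] (x : J → X)
    (C δ : ℝ) (hC : 0 < C) (hδ0 : 0 < δ) (hδ1 : δ < 1)
    (hequi : ∀ B : Set X,
      (1 - δ) * (lam ((nbhd δ Bᶜ)ᶜ)).toReal ≤ (Nat.card {j : J // x j ∈ B} : ℝ) / C ∧
      (Nat.card {j : J // x j ∈ B} : ℝ) / C ≤ (1 + δ) * (lam (nbhd δ B)).toReal) :
    lam ((nbhd δ (Set.range x))ᶜ) = 0 ∧
    ((∀ U : Set X, IsOpen U → U.Nonempty → 0 < lam U) →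
      ∀ r > δ, nbhd r (Set.range x) = Set.univ) := by
  simp only [nbhd_eq_thickening] at hequi ⊢
  exact stmt14_general (ENNReal.ofReal_pos.mpr (mul_pos (sub_pos.mpr hδ1) hC)).ne'
    fun B => ofReal_mul_measure_le_encard hC (hequi B).1
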